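/- For any complex symmetric n×n matrix S there exists a unitary matrix U such that U S Uᵀ is diagonal with real non-negative entries (Takagi factorization). -/

import Mathlib

open Matrix

/-!
A symmetric matrix `S` gives the antilinear map `T x = S x̄` on `ℂⁿ`, with `⟪T x, y⟫ = ⟪T y, x⟫`.
For the real inner product `Re ⟪x, y⟫` it is a self-adjoint real-linear operator, so it has a real
eigenvalue; as `T (i x) = -i T x`, replacing an eigenvector `x` by `i x` flips the sign of the
eigenvalue, which may therefore be taken non-negative. The orthogonal complement of a `T`-invariant
complex subspace is `T`-invariant, so `ℂⁿ` has an orthonormal basis with `T bⱼ = dⱼ bⱼ`, `0 ≤ dⱼ`.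
The unitary matrix `V` with columns `bⱼ` satisfies `S V̄ = V diag(d)`, and `U = Vᴴ` diagonalizes
`S`.
-/

open scoped InnerProductSpace

section ConjSymmetric

variable {𝕜 E : Type*} [RCLike 𝕜] [NormedAddCommGroup E] [InnerProductSpace 𝕜 E]

/-- Self-adjointness of an antilinear operator, the property behind its orthogonal diagonalization.
It does not read `⟪T x, y⟫ = ⟪x, T y⟫`, whose left side is linear and whose right side is antilinear
in `x`: moving `T` across the inner product also conjugates. -/
def IsConjSymmetric (T : E →ₗ⋆[𝕜] E) : Prop :=
  ∀ x y, ⟪T x, y⟫_𝕜 = ⟪T y, x⟫_𝕜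

namespace IsConjSymmetric

variable {T : E →ₗ⋆[𝕜] E}

theorem restrict (hT : IsConjSymmetric T) {W : Submodule 𝕜 E} (hW : ∀ x ∈ W, T x ∈ W) :
    IsConjSymmetric (T.restrict hW) :=
  fun x y => hT x y

theorem apply_mem_orthogonal (hT : IsConjSymmetric T) {W : Submodule 𝕜 E}
    (hW : ∀ x ∈ W, T x ∈ W) : ∀ x ∈ Wᗮ, T x ∈ Wᗮ := by
  intro x hx y hy
  rw [inner_eq_zero_symm, hT x y]
  exact hx _ (hW y hy)

end IsConjSymmetric

end ConjSymmetric

theorem apply_mem_span_range_of_apply_eq_smul {R M κ : Type*} [Semiring R] [AddCommMonoid M]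
    [Module R M] {σ : R →+* R} {T : M →ₛₗ[σ] M} {v : κ → M} {c : κ → R}
    (hv : ∀ i, T (v i) = c i • v i) :
    ∀ x ∈ Submodule.span R (Set.range v), T x ∈ Submodule.span R (Set.range v) := by
  suffices Submodule.span R (Set.range v) ≤ (Submodule.span R (Set.range v)).comap T from this
  rw [Submodule.span_le]
  rintro _ ⟨i, rfl⟩
  rw [SetLike.mem_coe, Submodule.mem_comap, hv i]
  exact Submodule.smul_mem _ _ (Submodule.subset_span (Set.mem_range_self i))

theorem exists_apply_eq_abs_smul {M : Type*} [AddCommGroup M] [Module ℂ M] {T : M →ₗ⋆[ℂ] M}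
    {x : M} {μ : ℝ} (hx : x ≠ 0) (hTx : T x = (μ : ℂ) • x) :
    ∃ y : M, y ≠ 0 ∧ T y = ((|μ| : ℝ) : ℂ) • y := by
  rcases abs_choice μ with hμ | hμ
  · exact ⟨x, hx, by rw [hTx, hμ]⟩
  · refine ⟨Complex.I • x, smul_ne_zero Complex.I_ne_zero hx, ?_⟩
    rw [T.map_smulₛₗ, hTx, hμ, Complex.conj_I, smul_comm, Complex.ofReal_neg, neg_smul, neg_smul,
      smul_neg]

section Complex

attribute [local instance] InnerProductSpace.complexToReal

variable {E : Type*} [NormedAddCommGroup E] [InnerProductSpace ℂ E]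

/-- An antilinear operator regarded as a real-linear one, so that the real spectral theory of
symmetric operators applies to it. -/
def conjLinearToReal (T : E →ₗ⋆[ℂ] E) : E →ₗ[ℝ] E where
  toFun := T
  map_add' := T.map_add
  map_smul' r x := by
    rw [← Complex.coe_smul, T.map_smulₛₗ, Complex.conj_ofReal, Complex.coe_smul, RingHom.id_apply]

namespace IsConjSymmetric

variable {T : E →ₗ⋆[ℂ] E}

theorem isSymmetric_conjLinearToReal (hT : IsConjSymmetric T) :
    (conjLinearToReal T).IsSymmetric := by
  intro x y
  rw [real_inner_eq_re_inner ℂ, real_inner_eq_re_inner ℂ]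
  exact (congrArg RCLike.re (hT x y)).trans (inner_re_symm (T y) x)

variable [FiniteDimensional ℂ E]

theorem exists_apply_eq_real_smul [Nontrivial E] (hT : IsConjSymmetric T) :
    ∃ x : E, x ≠ 0 ∧ ∃ μ : ℝ, T x = (μ : ℂ) • x := by
  have : FiniteDimensional ℝ E := FiniteDimensional.complexToReal E
  obtain ⟨x, hx⟩ :=
    hT.isSymmetric_conjLinearToReal.hasEigenvalue_iSup_of_finiteDimensional.exists_hasEigenvector
  exact ⟨x, hx.2, _, hx.apply_eq_smul⟩

theorem exists_norm_eq_one_apply_eq_nonneg_smul [Nontrivial E] (hT : IsConjSymmetric T) :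
    ∃ u : E, ‖u‖ = 1 ∧ ∃ d : ℝ, 0 ≤ d ∧ T u = (d : ℂ) • u := by
  obtain ⟨x, hx, μ, hTx⟩ := hT.exists_apply_eq_real_smul
  obtain ⟨y, hy, hTy⟩ := exists_apply_eq_abs_smul hx hTx
  refine ⟨((‖y‖⁻¹ : ℝ) : ℂ) • y, ?_, |μ|, abs_nonneg μ, ?_⟩
  · simpa using norm_smul_inv_norm (𝕜 := ℂ) hy
  · rw [T.map_smulₛₗ, hTy, Complex.conj_ofReal, smul_comm]

theorem exists_orthonormal_apply_eq_nonneg_smul (hT : IsConjSymmetric T) (k : ℕ)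
    (hk : k ≤ Module.finrank ℂ E) :
    ∃ v : Fin k → E, Orthonormal ℂ v ∧ ∃ d : Fin k → ℝ,
      ∀ i, 0 ≤ d i ∧ T (v i) = (d i : ℂ) • v i := by
  induction k with
  | zero => exact ⟨Fin.elim0, by simp, Fin.elim0, fun i => i.elim0⟩
  | succ k ih =>
    obtain ⟨v, hv, d, hd⟩ := ih (by omega)
    let K := Submodule.span ℂ (Set.range v)
    have hKT : ∀ x ∈ Kᗮ, T x ∈ Kᗮ :=
      hT.apply_mem_orthogonal (apply_mem_span_range_of_apply_eq_smul fun i => (hd i).2)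
    have hK : Module.finrank ℂ K = k := by
      rw [finrank_span_eq_card hv.linearIndependent, Fintype.card_fin]
    have : Nontrivial Kᗮ := by
      have := K.finrank_add_finrank_orthogonal
      exact Module.nontrivial_of_finrank_pos (R := ℂ) (by omega)
    obtain ⟨u, hu, e, he, hTu⟩ := (hT.restrict hKT).exists_norm_eq_one_apply_eq_nonneg_smul
    refine ⟨vecCons u v, orthonormal_vecCons_iff.2 ⟨hu, fun i => ?_, hv⟩, vecCons e d,
      Fin.forall_fin_succ.2 ⟨⟨he, congrArg Subtype.val hTu⟩, hd⟩⟩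
    exact K.inner_left_of_mem_orthogonal (Submodule.subset_span (Set.mem_range_self i)) u.2

theorem exists_orthonormalBasis_apply_eq_nonneg_smul {ι : Type*} [Fintype ι]
    (hT : IsConjSymmetric T) (hι : Module.finrank ℂ E = Fintype.card ι) :
    ∃ b : OrthonormalBasis ι ℂ E, ∃ d : ι → ℝ, ∀ i, 0 ≤ d i ∧ T (b i) = (d i : ℂ) • b i := by
  obtain ⟨v, hv, d, hd⟩ := hT.exists_orthonormal_apply_eq_nonneg_smul (Fintype.card ι) hι.ge
  let e := Fintype.equivFin ι
  obtain ⟨b, hb⟩ := Orthonormal.exists_orthonormalBasis_extension_of_card_eq hι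
    (v := v ∘ e) (s := Set.univ) ((hv.comp e e.injective).comp _ Subtype.val_injective)
  refine ⟨b, d ∘ e, fun i => ?_⟩
  rw [hb i (Set.mem_univ i)]
  exact hd (e i)

end IsConjSymmetric

end Complex

section Matrix

variable {𝕜 ι : Type*} [RCLike 𝕜] [Fintype ι]

/-- The antilinear operator `x ↦ S x̄` of a square matrix `S`. Its eigenvectors in an orthonormal
basis are the columns of `Uᴴ` in a factorization `U S Uᵀ = diagonal d` with `U` unitary. -/
def conjMulVecLin (S : Matrix ι ι 𝕜) : EuclideanSpace 𝕜 ι →ₗ⋆[𝕜] EuclideanSpace 𝕜 ι where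
  toFun x := WithLp.toLp 2 (S *ᵥ star x.ofLp)
  map_add' x y := by simp [mulVec_add]
  map_smul' c x := by simp [mulVec_smul]

theorem isConjSymmetric_conjMulVecLin {S : Matrix ι ι 𝕜} (hS : S.IsSymm) :
    IsConjSymmetric (conjMulVecLin S) := by
  intro x y
  have hS' : Sᴴᵀ = Sᴴ := hS.conjTranspose
  calc ⟪conjMulVecLin S x, y⟫_𝕜 = y.ofLp ⬝ᵥ star (S *ᵥ star x.ofLp) :=
        EuclideanSpace.inner_eq_star_dotProduct _ _
    _ = y.ofLp ⬝ᵥ Sᴴ *ᵥ x.ofLp := by rw [star_mulVec, star_star, ← mulVec_transpose, hS']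
    _ = x.ofLp ⬝ᵥ star (S *ᵥ star y.ofLp) := by
        rw [star_mulVec, star_star, dotProduct_mulVec, dotProduct_comm]
    _ = ⟪conjMulVecLin S y, x⟫_𝕜 :=
        (EuclideanSpace.inner_eq_star_dotProduct (conjMulVecLin S y) x).symm

theorem exists_mem_unitaryGroup_mul_mul_transpose_eq_diagonal [DecidableEq ι] {S : Matrix ι ι 𝕜}
    (b : OrthonormalBasis ι 𝕜 (EuclideanSpace 𝕜 ι)) (d : ι → 𝕜)
    (hb : ∀ j, conjMulVecLin S (b j) = d j • b j) :
    ∃ U ∈ unitaryGroup ι 𝕜, U * S * Uᵀ = diagonal d := by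
  let V : Matrix ι ι 𝕜 := (EuclideanSpace.basisFun ι 𝕜).toBasis.toMatrix b
  have hV : V ∈ unitaryGroup ι 𝕜 :=
    (EuclideanSpace.basisFun ι 𝕜).toMatrix_orthonormalBasis_mem_unitary b
  have hSV : S * Vᴴᵀ = V * diagonal d := by
    ext i j
    rw [mul_diagonal, mul_comm]
    exact congrArg (fun x : EuclideanSpace 𝕜 ι => x i) (hb j)
  refine ⟨Vᴴ, Unitary.star_mem hV, ?_⟩
  rw [Matrix.mul_assoc, hSV, ← Matrix.mul_assoc, ← star_eq_conjTranspose,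
    mem_unitaryGroup_iff'.1 hV, Matrix.one_mul]

end Matrix

theorem stmt3_general {ι : Type*} [Fintype ι] [DecidableEq ι] (S : Matrix ι ι ℂ) (hS : Sᵀ = S) :
    ∃ U ∈ unitaryGroup ι ℂ, ∃ d : ι → ℝ,
      (∀ i, 0 ≤ d i) ∧ U * S * Uᵀ = diagonal (fun i => (d i : ℂ)) := by
  obtain ⟨b, d, hbd⟩ :=
    (isConjSymmetric_conjMulVecLin hS).exists_orthonormalBasis_apply_eq_nonneg_smul
      finrank_euclideanSpace
  obtain ⟨U, hU, hUS⟩ :=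
    exists_mem_unitaryGroup_mul_mul_transpose_eq_diagonal b (fun i => (d i : ℂ)) fun i => (hbd i).2
  exact ⟨U, hU, d, fun i => (hbd i).1, hUS⟩

/-- Takagi factorization: every complex symmetric matrix `S` can be written
as `U S Uᵀ = diagonal`, with `U` unitary and the diagonal entries real non-negative. -/
theorem stmt3 (n : ℕ) (S : Matrix (Fin n) (Fin n) ℂ) (hS : Sᵀ = S) :
    ∃ U ∈ Matrix.unitaryGroup (Fin n) ℂ, ∃ d : Fin n → ℝ,
      (∀ i, 0 ≤ d i) ∧ U * S * Uᵀ = Matrix.diagonal (fun i => (d i : ℂ)) :=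
  stmt3_general S hS
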